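/- For every triple of type A τ = (k, p, q) there exists a unique permutation w(τ) of the positive integers (fixing all but finitely many integers) of minimal inversion number among those satisfying #{ j > p_i : w(j) ≤ q_i } = k_i for all 1 ≤ i ≤ s. The permutation w(τ) avoids the pattern 2143 and is not the identity, and the map τ ↦ w(τ) is a bijection from the set of triples of type A onto the set of non-identity permutations of the positive integers (fixing all but finitely many integers) that avoid the pattern 2143. -/

import Mathlib

/-- A triple of type A: sequences `k₁ < ⋯ < k_s`, `p₁ ≥ ⋯ ≥ p_s`, `q₁ ≤ ⋯ ≤ q_s` of
positive integers with `k_i ≤ q_i`, `(p_i − p_{i+1}) + (q_{i+1} − q_i) > k_{i+1} − k_i`,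
and `p_s − q_s + k_s > 0`.  The sequences are recorded as functions on `ℕ` (1-based),
normalized to vanish outside `{1, …, s}`. -/
structure TripleA where
  s : ℕ
  kf : ℕ → ℕ
  pf : ℕ → ℕ
  qf : ℕ → ℕ
  hs : 1 ≤ s
  hpos : ∀ i, 1 ≤ i → i ≤ s → 0 < kf i ∧ 0 < pf i ∧ 0 < qf i
  hkinc : ∀ i, 1 ≤ i → i < s → kf i < kf (i + 1)
  hpdec : ∀ i, 1 ≤ i → i < s → pf (i + 1) ≤ pf i
  hqinc : ∀ i, 1 ≤ i → i < s → qf i ≤ qf (i + 1)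
  hkq : ∀ i, 1 ≤ i → i ≤ s → kf i ≤ qf i
  /-- `(p_i − p_{i+1}) + (q_{i+1} − q_i) > k_{i+1} − k_i`, in subtraction-free form. -/
  hineq : ∀ i, 1 ≤ i → i < s → kf (i + 1) + pf (i + 1) + qf i < kf i + pf i + qf (i + 1)
  /-- `p_s − q_s + k_s > 0`, in subtraction-free form. -/
  hlast : qf s < pf s + kf s
  hnorm : ∀ i, (i = 0 ∨ s < i) → kf i = 0 ∧ pf i = 0 ∧ qf i = 0

/-- Permutations of the positive integers are encoded as permutations of `ℕ`
fixing `0`; this predicate says that all but finitely many integers are fixed. -/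
def FixesAeFin (w : Equiv.Perm ℕ) : Prop := {n : ℕ | w n ≠ n}.Finite

/-- The inversion number of a permutation: the number of pairs `i < j` with `w i > w j`. -/
noncomputable def invNum (w : Equiv.Perm ℕ) : ℕ :=
  {p : ℕ × ℕ | p.1 < p.2 ∧ w p.2 < w p.1}.ncard

/-- `w` is a finitary permutation of the positive integers satisfying the counting
conditions `#{ j > p_i : w(j) ≤ q_i } = k_i` of the triple `τ`. -/
def SatisfiesTriple (τ : TripleA) (w : Equiv.Perm ℕ) : Prop :=
  w 0 = 0 ∧ FixesAeFin w ∧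
    ∀ i, 1 ≤ i → i ≤ τ.s → {j : ℕ | τ.pf i < j ∧ w j ≤ τ.qf i}.ncard = τ.kf i

/-- `w` has minimal inversion number among the permutations satisfying `τ`. -/
def IsMinFor (τ : TripleA) (w : Equiv.Perm ℕ) : Prop :=
  SatisfiesTriple τ w ∧ ∀ w' : Equiv.Perm ℕ, SatisfiesTriple τ w' → invNum w ≤ invNum w'

/-- `w` avoids the pattern `2143`: there are no `a < b < c < d` with
`w(b) < w(a) < w(d) < w(c)`. -/
def Avoids2143 (w : Equiv.Perm ℕ) : Prop :=
  ¬ ∃ a b c d : ℕ, a < b ∧ b < c ∧ c < d ∧ w b < w a ∧ w a < w d ∧ w d < w c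

/-!
Call a pair `(p_i, q_i)` a corner of the triple. Swapping the two entries of an inversion of `w`
changes the count at a corner only if one entry lies north-east and the other south-west of it, and
it always lowers the inversion number. Hence every inversion of a minimal `w` is witnessed in this
way by a corner. Since the corners are nested, a permutation with this property is
lexicographically least among those with the same counts, which gives uniqueness, and it avoids
`2143`, since the two inversions of that pattern would need witnesses that are not nested. Existence
follows by satisfying the counting conditions one after the other, moving single entries.

The inequalities on the triple provide, for each corner, an entry south-west of it but of no
earlier corner and an entry north-east of it but of no later one. So the corners are exactly
Fulton's essential set of `w`, and the triple is recovered from `w`. Conversely, the essential set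
of any `w` witnesses all its inversions, and it is nested when `w` avoids `2143`; listing it by
increasing south-west counts gives the triple of `w`.
-/

namespace Vexillary

/-! ### Enumerations of finite sets -/

lemma eqOn_of_strictMonoOn_Icc {α : Type*} [PartialOrder α] {f g : ℕ → α} {m n : ℕ}
    (hf : StrictMonoOn f (Set.Icc 1 m)) (hg : StrictMonoOn g (Set.Icc 1 n))
    (h : f '' Set.Icc 1 m = g '' Set.Icc 1 n) :
    m = n ∧ Set.EqOn f g (Set.Icc 1 m) := by
  obtain rfl : m = n := by
    simpa [hf.injOn.ncard_image, hg.injOn.ncard_image] using congrArg Set.ncard h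
  rw [← Set.domRestrict_eq_domRestrict_iff]
  exact ⟨rfl, (hf.domRestrict.range_inj hg.domRestrict).1 (by simpa only [Set.range_domRestrict])⟩

lemma exists_strictMonoOn_enumeration {α : Type*} [Zero α] {S : Set α} {r : α → ℕ}
    (hS : S.Finite) (hr : Set.InjOn r S) :
    ∃ n, ∃ c : ℕ → α, StrictMonoOn (r ∘ c) (Set.Icc 1 n) ∧ c '' Set.Icc 1 n = S ∧
      ∀ i ∉ Set.Icc 1 n, c i = 0 := by
  have hfin : (Set.ofPred (· ∈ r '' S)).Finite := hS.image r
  set n := hfin.toFinset.card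
  have hnth (i : ℕ) (hi : i ∈ Set.Icc 1 n) : Nat.nth (· ∈ r '' S) (i - 1) ∈ r '' S :=
    Nat.nth_mem_of_lt_card hfin (by grind)
  choose! f hfS hfr using hnth
  have hc : Set.EqOn ((Set.Icc 1 n).indicator f) f (Set.Icc 1 n) := Set.eqOn_indicator
  refine ⟨n, (Set.Icc 1 n).indicator f, ?_, ?_, fun i hi => Set.indicator_of_notMem hi f⟩
  · intro i hi j hj hij
    simp only [Function.comp_apply, hc hi, hc hj, hfr i hi, hfr j hj]
    exact Nat.nth_lt_nth_of_lt_card hfin (by grind) (by grind)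
  · rw [hc.image_eq]
    refine (Set.image_subset_iff.2 hfS).antisymm fun x hx => ?_
    obtain ⟨m, hm, hmx⟩ := Nat.exists_lt_card_finite_nth_eq hfin (Set.mem_image_of_mem r hx)
    have hi : m + 1 ∈ Set.Icc 1 n := ⟨by omega, hm⟩
    exact ⟨m + 1, hi, hr (hfS _ hi) hx ((hfr _ hi).trans hmx)⟩

/-! ### Inversions and rank regions -/

variable {w w' : Equiv.Perm ℕ} {E : Set (ℕ × ℕ)} {a b j p q : ℕ} {e f : ℕ × ℕ}

/-- The set of inversions of `w`, whose cardinality is `invNum w`. -/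
def inversions (w : Equiv.Perm ℕ) : Set (ℕ × ℕ) := {e | e.1 < e.2 ∧ w e.2 < w e.1}

lemma finite_inversions (hf : FixesAeFin w) : (inversions w).Finite := by
  obtain ⟨N, hN⟩ := hf.bddAbove
  have hfix (n : ℕ) (hn : N < n) : w n = n := by
    by_contra hne
    exact hn.not_ge (hN hne)
  refine ((Set.finite_Iic N).prod (Set.finite_Iic N)).subset ?_
  rintro ⟨a, b⟩ ⟨hab, hw⟩
  have hb : b ≤ N := by
    by_contra! hb
    have hwb := hfix b hb
    have hwa := w.injective (hfix (w a) (by grind))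
    grind
  exact ⟨hab.le.trans hb, hb⟩

lemma invNum_mul_swap_lt (hf : FixesAeFin w) (hab : a < b) (hw : w b < w a) :
    invNum (w * Equiv.swap a b) < invNum w := by
  set s := Equiv.swap a b
  -- Inversions not reordered by `s` are transported along `s`; the others share an endpoint with
  -- the inversion `(a, b)` of `w` and remain inversions of `w`.
  let f : ℕ × ℕ → ℕ × ℕ := fun e => if s e.1 < s e.2 then (s e.1, s e.2) else e
  have hmaps : f '' inversions (w * s) ⊂ inversions w := by
    rw [Set.ssubset_iff_of_subset]
    · refine ⟨(a, b), ⟨hab, hw⟩, ?_⟩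
      rintro ⟨⟨i, j⟩, ⟨hij, hwij⟩, hfij⟩
      grind [Equiv.Perm.mul_apply]
    · rintro _ ⟨⟨i, j⟩, ⟨hij, hwij⟩, rfl⟩
      simp only [inversions, Set.mem_ofPred_eq]
      grind [Equiv.Perm.mul_apply]
  have hinj : Set.InjOn f (inversions (w * s)) := by
    rintro ⟨i, j⟩ ⟨hij, -⟩ ⟨i', j'⟩ ⟨hij', -⟩ h
    grind
  calc invNum (w * s) = (f '' inversions (w * s)).ncard := hinj.ncard_image.symm
    _ < invNum w := Set.ncard_lt_ncard hmaps (finite_inversions hf)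

lemma exists_inversion (hw : w ≠ 1) : ∃ a b, a < b ∧ w b < w a := by
  by_contra! h
  have hmono : StrictMono w := fun a b hab => (h a b hab).lt_of_ne (w.injective.ne hab.ne)
  exact hw (Equiv.coe_fn_injective ((hmono.range_inj strictMono_id).1 (by
    rw [w.surjective.range_eq, Set.range_id])))

/-- The positions of the entries of the permutation matrix of `w` in rows after `p` and columns up
to `q`; the counting condition of a triple prescribes the cardinality of this set. -/
def southWest (w : Equiv.Perm ℕ) (p q : ℕ) : Finset ℕ :=
  (Finset.Iic q).map w.symm.toEmbedding \ Finset.Iic p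

/-- The positions of the entries of the permutation matrix of `w` in rows up to `p` and columns
after `q`. -/
def northEast (w : Equiv.Perm ℕ) (p q : ℕ) : Finset ℕ :=
  Finset.Iic p \ (Finset.Iic q).map w.symm.toEmbedding

@[simp]
lemma mem_southWest : j ∈ southWest w p q ↔ p < j ∧ w j ≤ q := by
  simp [southWest, and_comm, Finset.mem_map_equiv]

@[simp]
lemma mem_northEast : j ∈ northEast w p q ↔ j ≤ p ∧ q < w j := by
  simp [northEast, Finset.mem_map_equiv]

lemma card_northEast_add (w : Equiv.Perm ℕ) (p q : ℕ) :
    (northEast w p q).card + q = (southWest w p q).card + p := by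
  have h := Finset.card_sdiff_add_card (Finset.Iic p) ((Finset.Iic q).map w.symm.toEmbedding)
  rw [Finset.union_comm, ← Finset.card_sdiff_add_card] at h
  simp only [Finset.card_map, Nat.card_Iic] at h
  rw [southWest, northEast]
  omega

lemma card_southWest_le (h0 : w 0 = 0) (p q : ℕ) : (southWest w p q).card ≤ q := by
  have hsub : northEast w p q ⊆ Finset.Icc 1 p := by grind [mem_northEast]
  have hle := Finset.card_le_card hsub
  have := card_northEast_add w p q
  rw [Nat.card_Icc] at hle
  omega

lemma card_southWest_mul_swap (hab : a < b) (hw : w b < w a)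
    (hsep : ¬(a ∈ northEast w p q ∧ b ∈ southWest w p q)) :
    (southWest (w * Equiv.swap a b) p q).card = (southWest w p q).card := by
  by_cases hside : p < a ↔ p < b
  · have himage : southWest (w * Equiv.swap a b) p q =
        (southWest w p q).map (Equiv.swap a b).toEmbedding := by
      ext j
      have : p < Equiv.swap a b j ↔ p < j := by grind
      simp [Finset.mem_map_equiv, this]
    rw [himage, Finset.card_map]
  · congr 1
    ext j
    simp only [mem_southWest, mem_northEast, Equiv.Perm.mul_apply] at hsep ⊢
    grind

/-- The partial order on corners `(p, q)` given by inclusion of south-west regions. -/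
def Nested (e f : ℕ × ℕ) : Prop := f.1 ≤ e.1 ∧ e.2 ≤ f.2

instance : Std.Refl Nested := ⟨fun _ => ⟨le_rfl, le_rfl⟩⟩

/-- Every inversion of `w` is witnessed by a corner in `E`, with one of its entries in the
north-east region of that corner and the other in the south-west region. -/
def Separates (E : Set (ℕ × ℕ)) (w : Equiv.Perm ℕ) : Prop :=
  ∀ ⦃a b⦄, a < b → w b < w a → ∃ e ∈ E, a ∈ northEast w e.1 e.2 ∧ b ∈ southWest w e.1 e.2

/-! ### Separating families of corners and the essential set -/

lemma Separates.exists_forall_lt_apply (hE : IsChain Nested E) (hsep : Separates E w) (hab : a < b)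
    (hw : w b < w a) :
    ∃ e ∈ E, a ∈ northEast w e.1 e.2 ∧ b ∈ southWest w e.1 e.2 ∧
      ∀ c, a < c → c ≤ e.1 → e.2 < w c := by
  -- Take a witness of `(a, b)` with least first coordinate: if the conclusion failed at `c`, then
  -- `(a, c)` would be an inversion whose witness, lying further up, also witnesses `(a, b)`.
  obtain ⟨⟨p, q⟩, ⟨he, hae, hbe⟩, hmin⟩ := exists_minimalFor_of_wellFoundedLT
    (fun e => e ∈ E ∧ a ∈ northEast w e.1 e.2 ∧ b ∈ southWest w e.1 e.2) Prod.fst (hsep hab hw)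
  refine ⟨(p, q), he, hae, hbe, fun c hac hcp => ?_⟩
  simp only [mem_northEast, mem_southWest] at hae hbe hcp ⊢
  by_contra! hcq
  obtain ⟨e, heE, haf, hcf⟩ := hsep hac (hcq.trans_lt hae.2)
  simp only [mem_northEast, mem_southWest] at haf hcf
  rcases hE.total he heE with h | h <;> simp only [Nested] at h
  · have := hmin (j := e) ⟨heE, by simp; omega, by simp; omega⟩ h.1
    simp only at this
    omega
  · omega

lemma Separates.toLex_le (hE : IsChain Nested E) (hsep : Separates E w)
    (hcard : ∀ e ∈ E, (southWest w e.1 e.2).card = (southWest w' e.1 e.2).card) :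
    toLex ⇑w ≤ toLex ⇑w' := by
  by_contra! hlt
  obtain ⟨j, hagree, hj⟩ : ∃ j, (∀ i < j, w' i = w i) ∧ w' j < w j := hlt
  obtain ⟨j', hj'⟩ := w.surjective (w' j)
  have hjj' : j < j' := by
    by_contra! hle
    rcases hle.lt_or_eq with h | rfl
    · exact h.ne (w'.injective ((hagree j' h).trans hj'))
    · exact hj.ne' hj'
  obtain ⟨⟨p, q⟩, he, hje, hje', hlarge⟩ := hsep.exists_forall_lt_apply hE hjj' (hj' ▸ hj)
  simp only [mem_northEast, mem_southWest] at hje hje' hlarge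
  have hssub : northEast w' p q ⊂ northEast w p q := by
    rw [Finset.ssubset_iff_of_subset]
    · exact ⟨j, by simpa using hje, by simp; omega⟩
    · intro c
      simp only [mem_northEast]
      rintro ⟨hcp, hcq⟩
      refine ⟨hcp, ?_⟩
      rcases lt_trichotomy c j with h | rfl | h
      · exact hagree c h ▸ hcq
      · exact hje.2
      · exact hlarge c h hcp
  have := Finset.card_lt_card hssub
  have := card_northEast_add w p q
  have := card_northEast_add w' p q
  have := hcard _ he
  simp only at this
  omega

lemma Separates.eq (hE : IsChain Nested E) (hsep : Separates E w) (hsep' : Separates E w')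
    (hcard : ∀ e ∈ E, (southWest w e.1 e.2).card = (southWest w' e.1 e.2).card) : w = w' :=
  Equiv.coe_fn_injective <| toLex.injective <|
    (hsep.toLex_le hE hcard).antisymm (hsep'.toLex_le hE fun e he => (hcard e he).symm)

lemma Separates.avoids2143 (hE : IsChain Nested E) (hsep : Separates E w) : Avoids2143 w := by
  rintro ⟨a, b, c, d, hab, hbc, hcd, hwab, hwad, hwcd⟩
  obtain ⟨e, he, hae, hbe⟩ := hsep hab hwab
  obtain ⟨f, hf, hcf, hdf⟩ := hsep hcd hwcd
  simp only [mem_northEast, mem_southWest] at hae hbe hcf hdf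
  rcases hE.total he hf with h | h <;> simp only [Nested] at h <;> omega

/-- Fulton's essential set of `w`: the pairs `(p, q)` such that `w` has a descent at `p` across `q`
and `w⁻¹` has a descent at `q` across `p`. -/
def essentialSet (w : Equiv.Perm ℕ) : Set (ℕ × ℕ) :=
  {e | w (e.1 + 1) ≤ e.2 ∧ e.2 < w e.1 ∧ w.symm (e.2 + 1) ≤ e.1 ∧ e.1 < w.symm e.2}

lemma finite_essentialSet (hf : FixesAeFin w) : (essentialSet w).Finite := by
  have hinj : Function.Injective (fun e : ℕ × ℕ => (e.1, w.symm e.2)) := fun e f h => by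
    simpa [Prod.ext_iff] using h
  refine ((finite_inversions hf).preimage hinj.injOn).subset fun e he => ⟨he.2.2.2, ?_⟩
  simpa using he.2.1

lemma separates_essentialSet (w : Equiv.Perm ℕ) : Separates (essentialSet w) w := by
  intro a b hab hw
  -- Inside the rectangle of an inversion, an essential corner is reached by moving down and to the
  -- right for as long as possible.
  let R := (Finset.Ico a b ×ˢ Finset.Ico (w b) (w a)).filter
    fun e => e.2 < w e.1 ∧ e.1 < w.symm e.2
  have hR (p q : ℕ) : (p, q) ∈ R ↔
      ((a ≤ p ∧ p < b) ∧ w b ≤ q ∧ q < w a) ∧ q < w p ∧ p < w.symm q := by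
    simp [R]
  obtain ⟨⟨p, q⟩, hmem, hmax⟩ := R.exists_max_image (fun e => e.1 + e.2)
    ⟨(a, w b), (hR a (w b)).2 (by simp; omega)⟩
  have hdown : (p + 1, q) ∉ R := fun h => by simpa using hmax _ h
  have hright : (p, q + 1) ∉ R := fun h => by simpa using hmax _ h
  rw [hR] at hmem hdown hright
  refine ⟨(p, q), ⟨?_, hmem.2.1, ?_, hmem.2.2⟩, by simp; omega, by simp; omega⟩
  · have : w (p + 1) = q → w.symm q = p + 1 := by rintro rfl; simp
    grind
  · have : w p = q + 1 → w.symm (q + 1) = p := by intro h; simp [← h]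
    have : w a = q + 1 → w.symm (q + 1) = a := by intro h; simp [← h]
    grind

lemma essentialSet_nonempty_iff : (essentialSet w).Nonempty ↔ w ≠ 1 := by
  constructor
  · rintro ⟨e, hdesc, hdesc', -⟩ rfl
    simp only [Equiv.Perm.one_apply] at hdesc hdesc'
    omega
  · intro hw
    obtain ⟨a, b, hab, hwab⟩ := exists_inversion hw
    obtain ⟨e, he, -⟩ := separates_essentialSet w hab hwab
    exact ⟨e, he⟩

lemma isChain_essentialSet (hv : Avoids2143 w) : IsChain Nested (essentialSet w) := by
  have hsw : ∀ e ∈ essentialSet w, ∀ f ∈ essentialSet w, e.1 < f.1 → f.2 ≤ e.2 := by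
    rintro ⟨p, q⟩ ⟨hp, -, hq, -⟩ ⟨p', q'⟩ ⟨-, hp', -, hq'⟩ hlt
    simp only at *
    by_contra! hqq
    refine hv ⟨w.symm (q + 1), p + 1, p', w.symm q', by omega, ?_, hq', ?_, ?_, ?_⟩
    · have : p' ≠ p + 1 := by rintro rfl; omega
      omega
    · rw [w.apply_symm_apply]; omega
    · have : q' ≠ q + 1 := by rintro rfl; omega
      simp only [w.apply_symm_apply]
      omega
    · rwa [w.apply_symm_apply]
  intro e he f hf _
  have := hsw e he f hf
  have := hsw f hf e he
  simp only [Nested]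
  omega

lemma essentialSet_subset (hE : IsChain Nested E) (hsep : Separates E w) : essentialSet w ⊆ E := by
  rintro ⟨p, q⟩ ⟨hp, hp', hq, hq'⟩
  simp only at hp hp' hq hq'
  obtain ⟨e, he, hep⟩ := hsep (lt_add_one p) (hp.trans_lt hp')
  obtain ⟨f, hf, hfq⟩ := hsep (hq.trans_lt hq') (by simp)
  obtain ⟨g, hg, hgpq⟩ := hsep hq' (by simpa using hp')
  obtain ⟨h, hh, hhpq⟩ := hsep (hq.trans_lt (lt_add_one p)) (by simp; omega)
  simp only [mem_northEast, mem_southWest, w.apply_symm_apply] at hep hfq hgpq hhpq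
  have hep1 : e.1 = p := by omega
  have hfq2 : f.2 = q := by omega
  have hcases : e.2 = q ∨ f.1 = p ∨ g = (p, q) ∨ h = (p, q) := by
    have := hE.total hg hh
    have := hE.total he hg
    have := hE.total he hh
    have := hE.total hf hg
    have := hE.total hf hh
    simp only [Nested, Prod.ext_iff] at *
    omega
  rcases hcases with h | h | rfl | rfl
  · convert he <;> simp [*]
  · convert hf <;> simp [*]
  · exact hg
  · exact hh

lemma mem_essentialSet_of_separates (hsep : Separates E w)
    (ha : a ∈ northEast w p q) (hb : b ∈ southWest w p q)
    (ha' : ∀ e ∈ E, a ∈ northEast w e.1 e.2 → Nested e (p, q))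
    (hb' : ∀ e ∈ E, b ∈ southWest w e.1 e.2 → Nested (p, q) e) : (p, q) ∈ essentialSet w := by
  simp only [mem_northEast, mem_southWest, Nested] at ha hb ha' hb'
  refine ⟨?_, ?_, ?_, ?_⟩ <;> by_contra! h <;> simp only at h
  · have hne : b ≠ p + 1 := by rintro rfl; omega
    obtain ⟨e, he, hpe, hbe⟩ := hsep (a := p + 1) (b := b) (by omega) (by omega)
    have := hb' e he (mem_southWest.1 hbe)
    simp only [mem_northEast] at hpe
    omega
  · have hne : a ≠ p := by rintro rfl; omega
    obtain ⟨e, he, hae, hpe⟩ := hsep (a := a) (b := p) (by omega) (by omega)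
    have := ha' e he (mem_northEast.1 hae)
    simp only [mem_southWest] at hpe
    omega
  · have hne : w a ≠ q + 1 := by
      intro heq
      rw [← heq, w.symm_apply_apply] at h
      omega
    obtain ⟨e, he, hae, hqe⟩ := hsep (a := a) (b := w.symm (q + 1)) (by omega) (by simp; omega)
    have := ha' e he (mem_northEast.1 hae)
    simp only [mem_southWest, w.apply_symm_apply] at hqe
    omega
  · have hne : w b ≠ q := by
      intro heq
      rw [← heq, w.symm_apply_apply] at h
      omega
    obtain ⟨e, he, hqe, hbe⟩ := hsep (a := w.symm q) (b := b) (by omega) (by simp; omega)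
    have := hb' e he (mem_southWest.1 hbe)
    simp only [mem_northEast, w.apply_symm_apply] at hqe
    omega

lemma southWest_subset_of_nested (h : Nested e f) :
    southWest w e.1 e.2 ⊆ southWest w f.1 f.2 := by
  grind [mem_southWest, Nested]

lemma northEast_subset_of_nested (h : Nested e f) :
    northEast w f.1 f.2 ⊆ northEast w e.1 e.2 := by
  grind [mem_northEast, Nested]

lemma southWest_ssubset_of_nested (hf : f ∈ essentialSet w) (h : Nested e f)
    (hne : e ≠ f) : southWest w e.1 e.2 ⊂ southWest w f.1 f.2 := by
  rw [Finset.ssubset_iff_of_subset (southWest_subset_of_nested h)]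
  obtain ⟨h1, h2⟩ := h
  obtain ⟨hf1, -, -, hf2⟩ := hf
  rcases h1.lt_or_eq with hlt | heq
  · exact ⟨f.1 + 1, by simpa using hf1, by simp; omega⟩
  · have hlt : e.2 < f.2 := h2.lt_of_ne fun heq' => hne (Prod.ext heq.symm heq')
    exact ⟨w.symm f.2, by simpa using hf2, by simp [hlt]⟩

lemma northEast_ssubset_of_nested (he : e ∈ essentialSet w) (h : Nested e f)
    (hne : e ≠ f) : northEast w f.1 f.2 ⊂ northEast w e.1 e.2 := by
  rw [Finset.ssubset_iff_of_subset (northEast_subset_of_nested h)]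
  obtain ⟨h1, h2⟩ := h
  obtain ⟨-, he1, he2, -⟩ := he
  rcases h1.lt_or_eq with hlt | heq
  · exact ⟨e.1, by simpa using he1, by simp; omega⟩
  · have hlt : e.2 < f.2 := h2.lt_of_ne fun heq' => hne (Prod.ext heq.symm heq')
    exact ⟨w.symm (e.2 + 1), by simpa using he2, by simp; omega⟩

lemma card_southWest_pos (he : e ∈ essentialSet w) :
    0 < (southWest w e.1 e.2).card :=
  Finset.card_pos.2 ⟨e.1 + 1, mem_southWest.2 ⟨lt_add_one e.1, he.1⟩⟩

lemma fst_pos_of_mem_essentialSet (h0 : w 0 = 0) (he : e ∈ essentialSet w) :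
    0 < e.1 := by
  by_contra! hp
  simpa [Nat.le_zero.1 hp, h0] using he.2.1

lemma snd_lt_of_mem_essentialSet (he : e ∈ essentialSet w) :
    e.2 < e.1 + (southWest w e.1 e.2).card := by
  have hpos := Finset.card_pos.2 ⟨e.1, mem_northEast.2 ⟨le_rfl, he.2.1⟩⟩
  have := card_northEast_add w e.1 e.2
  omega

lemma card_southWest_add_lt_of_nested (he : e ∈ essentialSet w) (h : Nested e f)
    (hne : e ≠ f) :
    (southWest w f.1 f.2).card + f.1 + e.2 < (southWest w e.1 e.2).card + e.1 + f.2 := by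
  have := Finset.card_lt_card (northEast_ssubset_of_nested he h hne)
  have := card_northEast_add w e.1 e.2
  have := card_northEast_add w f.1 f.2
  omega

lemma injOn_card_southWest (hv : Avoids2143 w) :
    Set.InjOn (fun e => (southWest w e.1 e.2).card) (essentialSet w) := by
  intro e he f hf heq
  by_contra hne
  rcases (isChain_essentialSet hv).total he hf with h | h
  · exact (Finset.card_lt_card (southWest_ssubset_of_nested hf h hne)).ne heq
  · exact (Finset.card_lt_card (southWest_ssubset_of_nested he h (Ne.symm hne))).ne' heq

lemma nested_of_card_southWest_lt (hv : Avoids2143 w) (he : e ∈ essentialSet w)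
    (hf : f ∈ essentialSet w) (hlt : (southWest w e.1 e.2).card < (southWest w f.1 f.2).card) :
    Nested e f := by
  refine ((isChain_essentialSet hv).total he hf).resolve_right fun h => hlt.not_ge ?_
  exact Finset.card_le_card (southWest_ssubset_of_nested he h fun h => hlt.ne (by rw [h])).subset

/-! ### Permutations with prescribed counts -/

/-- The permutations of the positive integers fixing all but finitely many integers, encoded as
permutations of `ℕ` fixing `0`. -/
def IsFinitary (w : Equiv.Perm ℕ) : Prop := w 0 = 0 ∧ FixesAeFin w

lemma IsFinitary.mul (hw : IsFinitary w) (hw' : IsFinitary w') : IsFinitary (w * w') :=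
  ⟨by rw [Equiv.Perm.mul_apply, hw'.1, hw.1],
    (hw.2.union hw'.2).subset (Equiv.Perm.set_support_mul_subset w w')⟩

lemma isFinitary_swap (ha : 0 < a) (hb : 0 < b) : IsFinitary (Equiv.swap a b) :=
  ⟨Equiv.swap_apply_of_ne_of_ne ha.ne hb.ne, finite_compl_fixedBy_swap⟩

lemma isFinitary_one : IsFinitary 1 := ⟨rfl, by simp [FixesAeFin]⟩

lemma exists_card_southWest_eq_of_row_succ {k : ℕ} (hw : IsFinitary w)
    (hle : (southWest w (p + 1) q).card ≤ k) (hge : k ≤ (southWest w (p + 1) q).card + 1)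
    (hkq : k ≤ q) (hqk : q ≤ k + p) :
    ∃ w', IsFinitary w' ∧ (southWest w' p q).card = k ∧
      ∀ P Q, p + 1 ≤ P → southWest w' P Q = southWest w P Q := by
  have hNE := card_northEast_add w (p + 1) q
  obtain ⟨c, hc, hcp, hck⟩ : ∃ c, 0 < c ∧ c ≤ p + 1 ∧
      (southWest w (p + 1) q).card + (if w c ≤ q then 1 else 0) = k := by
    rcases hle.lt_or_eq with hlt | heq
    · obtain ⟨c, hc, hcq⟩ := Finset.exists_mem_notMem_of_card_lt_card
        (s := northEast w (p + 1) q) (t := Finset.Icc 1 (p + 1)) (by simp; omega)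
      simp only [Finset.mem_Icc, mem_northEast] at hc hcq
      exact ⟨c, hc.1, hc.2, by rw [if_pos (by omega)]; omega⟩
    · obtain ⟨c, hc⟩ := Finset.card_pos.1 (show 0 < (northEast w (p + 1) q).card by omega)
      rw [mem_northEast] at hc
      have hc0 : c ≠ 0 := by
        rintro rfl
        simp [hw.1] at hc
      exact ⟨c, by omega, hc.1, by rw [if_neg (by omega)]; omega⟩
  -- Moved to row `p + 1`, the entry of row `c` contributes to the count iff it is at most `q`.
  refine ⟨w * Equiv.swap c (p + 1), hw.mul (isFinitary_swap hc p.succ_pos), ?_, ?_⟩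
  · have hmem : southWest (w * Equiv.swap c (p + 1)) p q =
        southWest w (p + 1) q ∪ if w c ≤ q then {p + 1} else ∅ := by
      ext j
      simp only [mem_southWest, Equiv.Perm.mul_apply, Finset.mem_union]
      grind
    rw [hmem, Finset.card_union_of_disjoint (by split_ifs <;> simp), ← hck]
    split_ifs <;> rfl
  · intro P Q hP
    ext j
    simp only [mem_southWest, Equiv.Perm.mul_apply]
    grind

lemma exists_card_southWest_eq_of_column_succ {k : ℕ} (hw : IsFinitary w)
    (hle : (southWest w p q).card ≤ k) (hge : k ≤ (southWest w p q).card + 1)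
    (hqk : q + 1 ≤ k + p) :
    ∃ w', IsFinitary w' ∧ (southWest w' p (q + 1)).card = k ∧
      ∀ P Q, Q ≤ q → southWest w' P Q = southWest w P Q := by
  have hNE := card_northEast_add w p q
  obtain ⟨c, hcq, hck⟩ : ∃ c, q < w c ∧
      (southWest w p q).card + (if p < c then 1 else 0) = k := by
    rcases hle.lt_or_eq with hlt | heq
    · obtain ⟨c, hc⟩ := Infinite.exists_notMem_finset
        (Finset.Iic p ∪ (Finset.Iic q).map w.symm.toEmbedding)
      simp only [Finset.mem_union, Finset.mem_Iic, Finset.mem_map_equiv, Equiv.symm_symm, not_or,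
        not_le] at hc
      exact ⟨c, hc.2, by rw [if_pos hc.1]; omega⟩
    · obtain ⟨c, hc⟩ := Finset.card_pos.1 (show 0 < (northEast w p q).card by omega)
      rw [mem_northEast] at hc
      exact ⟨c, hc.2, by rw [if_neg (by omega)]; omega⟩
  -- Moved to column `q + 1`, the entry of row `c` contributes to the count iff `p < c`.
  refine ⟨Equiv.swap (w c) (q + 1) * w, (isFinitary_swap (by omega) q.succ_pos).mul hw, ?_, ?_⟩
  · have hmem : southWest (Equiv.swap (w c) (q + 1) * w) p (q + 1) =
        southWest w p q ∪ if p < c then {c} else ∅ := by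
      ext j
      have := w.injective.eq_iff (a := j) (b := c)
      simp only [mem_southWest, Equiv.Perm.mul_apply, Finset.mem_union]
      grind
    rw [hmem, Finset.card_union_of_disjoint (by split_ifs <;> simp [hcq]), ← hck]
    split_ifs <;> rfl
  · intro P Q hQ
    ext j
    simp only [mem_southWest, Equiv.Perm.mul_apply]
    grind

lemma exists_card_southWest_eq_of_row_le {k p' : ℕ} (hw : IsFinitary w) (hp : p' ≤ p)
    (hle : (southWest w p q).card ≤ k) (hge : k + p' ≤ (southWest w p q).card + p)
    (hkq : k ≤ q) (hqk : q ≤ k + p') :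
    ∃ w', IsFinitary w' ∧ (southWest w' p' q).card = k ∧
      ∀ P Q, p ≤ P → southWest w' P Q = southWest w P Q := by
  induction p, hp using Nat.le_induction generalizing w with
  | base => exact ⟨w, hw, by omega, fun _ _ _ => rfl⟩
  | succ p hp ih =>
    have hNE := card_northEast_add w (p + 1) q
    obtain ⟨w₁, hw₁, hcard₁, heq₁⟩ := exists_card_southWest_eq_of_row_succ (p := p) (q := q)
      (k := min k ((southWest w (p + 1) q).card + 1)) hw (by omega) (by omega) (by omega) (by omega)
    obtain ⟨w₂, hw₂, hcard₂, heq₂⟩ := ih hw₁ (by omega) (by omega)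
    exact ⟨w₂, hw₂, hcard₂, fun P Q hP => (heq₂ P Q (by omega)).trans (heq₁ P Q hP)⟩

lemma exists_card_southWest_eq_of_column_le {k q' : ℕ} (hw : IsFinitary w) (hq : q ≤ q')
    (hle : (southWest w p q).card ≤ k) (hge : k + q ≤ (southWest w p q).card + q')
    (hqk : q' ≤ k + p) :
    ∃ w', IsFinitary w' ∧ (southWest w' p q').card = k ∧
      ∀ P Q, Q ≤ q → southWest w' P Q = southWest w P Q := by
  induction q', hq using Nat.le_induction generalizing k with
  | base => exact ⟨w, hw, by omega, fun _ _ _ => rfl⟩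
  | succ q' hq ih =>
    have hNE := card_northEast_add w p q
    obtain ⟨w₁, hw₁, hcard₁, heq₁⟩ := ih (k := min k ((southWest w p q).card + (q' - q)))
      (by omega) (by omega) (by omega)
    obtain ⟨w₂, hw₂, hcard₂, heq₂⟩ := exists_card_southWest_eq_of_column_succ (k := k) hw₁
      (p := p) (q := q') (by omega) (by omega) (by omega)
    exact ⟨w₂, hw₂, hcard₂, fun P Q hQ => (heq₂ P Q (by omega)).trans (heq₁ P Q hQ)⟩

lemma exists_card_southWest_eq {k p' q' : ℕ} (hw : IsFinitary w) (hp : p' ≤ p) (hq : q ≤ q')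
    (hle : (southWest w p q).card ≤ k) (hge : k + p' + q ≤ (southWest w p q).card + p + q')
    (hkq : k ≤ q') (hqk : q' ≤ k + p') :
    ∃ w', IsFinitary w' ∧ (southWest w' p' q').card = k ∧
      ∀ P Q, p ≤ P → Q ≤ q → southWest w' P Q = southWest w P Q := by
  have hNE := card_northEast_add w p q
  have hSW := card_southWest_le hw.1 p q
  -- The count at the intermediate corner `(p', q)` is taken as large as its bounds allow.
  obtain ⟨w₁, hw₁, hcard₁, heq₁⟩ := exists_card_southWest_eq_of_row_le
    (q := q) (k := min (min k q) ((southWest w p q).card + (p - p'))) hw hp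
    (by omega) (by omega) (by omega) (by omega)
  obtain ⟨w₂, hw₂, hcard₂, heq₂⟩ := exists_card_southWest_eq_of_column_le (p := p') (k := k) hw₁ hq
    (by omega) (by omega) hqk
  exact ⟨w₂, hw₂, hcard₂, fun P Q hP hQ => (heq₂ P Q hQ).trans (heq₁ P Q hP)⟩

end Vexillary

open Vexillary

/-! ### Triples of type A -/

namespace TripleA

variable {τ τ' : TripleA} {w : Equiv.Perm ℕ} {i j : ℕ}

/-- The pair `(p_i, q_i)` at which the `i`-th counting condition of a triple is imposed. -/
def corner (τ : TripleA) (i : ℕ) : ℕ × ℕ := (τ.pf i, τ.qf i)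

/-- The set of pairs `(p_i, q_i)` with `1 ≤ i ≤ s`. -/
def corners (τ : TripleA) : Set (ℕ × ℕ) := τ.corner '' Set.Icc 1 τ.s

lemma corners_nonempty (τ : TripleA) : τ.corners.Nonempty :=
  (Set.nonempty_Icc.2 τ.hs).image _

lemma strictMonoOn_kf (τ : TripleA) : StrictMonoOn τ.kf (Set.Icc 1 τ.s) :=
  strictMonoOn_of_lt_add_one Set.ordConnected_Icc fun i _ hi hi' => τ.hkinc i hi.1 hi'.2

lemma antitoneOn_pf (τ : TripleA) : AntitoneOn τ.pf (Set.Icc 1 τ.s) :=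
  antitoneOn_of_add_one_le Set.ordConnected_Icc fun i _ hi hi' => τ.hpdec i hi.1 hi'.2

lemma monotoneOn_qf (τ : TripleA) : MonotoneOn τ.qf (Set.Icc 1 τ.s) :=
  monotoneOn_of_le_add_one Set.ordConnected_Icc fun i _ hi hi' => τ.hqinc i hi.1 hi'.2

lemma nested_corner (hi : i ∈ Set.Icc 1 τ.s) (hj : j ∈ Set.Icc 1 τ.s) (hij : i ≤ j) :
    Nested (τ.corner i) (τ.corner j) :=
  ⟨τ.antitoneOn_pf hi hj hij, τ.monotoneOn_qf hi hj hij⟩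

lemma isChain_corners (τ : TripleA) : IsChain Nested τ.corners := by
  rintro _ ⟨i, hi, rfl⟩ _ ⟨j, hj, rfl⟩ -
  exact (le_total i j).imp (nested_corner hi hj) (nested_corner hj hi)

lemma kf_add_pf_add_qf_lt (hi : i ∈ Set.Icc 1 τ.s) (hj : j ∈ Set.Icc 1 τ.s) (hij : i < j) :
    τ.kf j + τ.pf j + τ.qf i < τ.kf i + τ.pf i + τ.qf j := by
  have hanti : StrictAntiOn (fun i => (τ.kf i + τ.pf i - τ.qf i : ℤ)) (Set.Icc 1 τ.s) :=
    strictAntiOn_of_add_one_lt Set.ordConnected_Icc fun i _ hi hi' => by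
      have := τ.hineq i hi.1 hi'.2
      omega
  have := hanti hi hj hij
  simp only at this
  omega

lemma qf_lt_kf_add_pf (hi : i ∈ Set.Icc 1 τ.s) : τ.qf i < τ.kf i + τ.pf i := by
  have hlast := τ.hlast
  rcases hi.2.lt_or_eq with hlt | rfl
  · have := kf_add_pf_add_qf_lt hi (Set.right_mem_Icc.2 τ.hs) hlt
    omega
  · omega

lemma satisfiesTriple_iff : SatisfiesTriple τ w ↔
    IsFinitary w ∧ ∀ i ∈ Set.Icc 1 τ.s, (southWest w (τ.pf i) (τ.qf i)).card = τ.kf i := by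
  have hset (p q : ℕ) : {j : ℕ | p < j ∧ w j ≤ q} = southWest w p q := by
    ext
    simp
  simp only [SatisfiesTriple, IsFinitary, hset, Set.ncard_coe_finset, Set.mem_Icc, and_imp,
    and_assoc]

lemma exists_satisfiesTriple (τ : TripleA) : ∃ w, SatisfiesTriple τ w := by
  suffices h : ∀ n, 1 ≤ n → n ≤ τ.s → ∃ w, IsFinitary w ∧
      ∀ i ∈ Set.Icc 1 n, (southWest w (τ.pf i) (τ.qf i)).card = τ.kf i by
    simpa only [satisfiesTriple_iff] using h τ.s τ.hs le_rfl
  intro n hn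
  induction n, hn using Nat.le_induction with
  | base =>
    intro h1
    have hmem : 1 ∈ Set.Icc 1 τ.s := ⟨le_rfl, h1⟩
    have hempty : southWest 1 (τ.pf 1) 0 = ∅ := by
      ext j
      simp
      omega
    obtain ⟨w, hw, hcard, -⟩ := exists_card_southWest_eq isFinitary_one le_rfl (τ.qf 1).zero_le
      (k := τ.kf 1) (p := τ.pf 1) (by simp [hempty]) (by have := τ.hkq 1 le_rfl h1; omega)
      (τ.hkq 1 le_rfl h1) (qf_lt_kf_add_pf hmem).le
    exact ⟨w, hw, by simpa using hcard⟩
  | succ n hn ih =>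
    intro hns
    obtain ⟨w, hw, hcard⟩ := ih (by omega)
    have hcardn := hcard n ⟨hn, le_rfl⟩
    have hineq := τ.hineq n hn hns
    obtain ⟨w', hw', hcard', heq⟩ := exists_card_southWest_eq hw (τ.hpdec n hn hns)
      (τ.hqinc n hn hns) (hcardn.le.trans (τ.hkinc n hn hns).le) (by omega)
      (τ.hkq (n + 1) (by omega) hns) (qf_lt_kf_add_pf ⟨by omega, hns⟩).le
    refine ⟨w', hw', fun i hi => ?_⟩
    rcases hi.2.lt_or_eq with hlt | rfl
    · have hnest : Nested (τ.corner i) (τ.corner n) :=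
        nested_corner ⟨hi.1, by omega⟩ ⟨hn, by omega⟩ (by omega)
      exact (congrArg _ (heq _ _ hnest.1 hnest.2)).trans (hcard i ⟨hi.1, by omega⟩)
    · exact hcard'

lemma exists_isMinFor (τ : TripleA) : ∃ w, IsMinFor τ w := by
  obtain ⟨w, hw⟩ := τ.exists_satisfiesTriple
  obtain ⟨w, hmin⟩ := exists_minimalFor_of_wellFoundedLT (SatisfiesTriple τ) invNum ⟨w, hw⟩
  exact ⟨w, hmin.1, fun w' hw' => (le_total _ _).elim id (hmin.2 hw')⟩

/-- Swapping the entries of an inversion that is not witnessed by a corner preserves all the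
counting conditions while lowering the inversion number. -/
lemma separates_corners (hw : IsMinFor τ w) : Separates τ.corners w := by
  intro a b hab hwab
  by_contra! hsep
  obtain ⟨hsat, hmin⟩ := hw
  refine (hmin (w * Equiv.swap a b) ?_).not_gt (invNum_mul_swap_lt hsat.2.1 hab hwab)
  rw [satisfiesTriple_iff] at hsat ⊢
  have ha : 0 < a := by
    by_contra! ha
    simp [Nat.le_zero.1 ha, hsat.1.1] at hwab
  refine ⟨hsat.1.mul (isFinitary_swap ha (by omega)), fun i hi => ?_⟩
  rw [← hsat.2 i hi]
  exact card_southWest_mul_swap hab hwab fun h => hsep _ ⟨i, hi, rfl⟩ h.1 h.2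

lemma eq_of_separates_corners {w' : Equiv.Perm ℕ} (hw : SatisfiesTriple τ w)
    (hw' : SatisfiesTriple τ w') (hsep : Separates τ.corners w) (hsep' : Separates τ.corners w') :
    w = w' := by
  rw [satisfiesTriple_iff] at hw hw'
  refine hsep.eq τ.isChain_corners hsep' ?_
  rintro _ ⟨i, hi, rfl⟩
  exact (hw.2 i hi).trans (hw'.2 i hi).symm

lemma existsUnique_isMinFor (τ : TripleA) : ∃! w, IsMinFor τ w := by
  refine existsUnique_of_exists_of_unique τ.exists_isMinFor fun w w' hw hw' => ?_
  exact eq_of_separates_corners hw.1 hw'.1 (separates_corners hw) (separates_corners hw')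

lemma exists_mem_southWest_corner (hw : SatisfiesTriple τ w) (hi : i ∈ Set.Icc 1 τ.s) :
    ∃ b ∈ southWest w (τ.pf i) (τ.qf i),
      ∀ j ∈ Set.Icc 1 τ.s, b ∈ southWest w (τ.pf j) (τ.qf j) → i ≤ j := by
  have hcard := (satisfiesTriple_iff.1 hw).2
  rcases hi.1.lt_or_eq with hlt | rfl
  · have hi' : i - 1 ∈ Set.Icc 1 τ.s := ⟨by omega, by have := hi.2; omega⟩
    obtain ⟨b, hb, hb'⟩ := Finset.exists_mem_notMem_of_card_lt_card
      (s := southWest w (τ.pf (i - 1)) (τ.qf (i - 1))) (t := southWest w (τ.pf i) (τ.qf i))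
      (by rw [hcard _ hi', hcard _ hi]; exact τ.strictMonoOn_kf hi' hi (by omega))
    refine ⟨b, hb, fun j hj hbj => ?_⟩
    by_contra! hji
    exact hb' (southWest_subset_of_nested (nested_corner hj hi' (by omega)) hbj)
  · obtain ⟨b, hb⟩ := Finset.card_pos.1 ((hcard 1 hi).symm ▸ (τ.hpos 1 le_rfl hi.2).1)
    exact ⟨b, hb, fun j hj _ => hj.1⟩

lemma exists_mem_northEast_corner (hw : SatisfiesTriple τ w) (hi : i ∈ Set.Icc 1 τ.s) :
    ∃ a ∈ northEast w (τ.pf i) (τ.qf i),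
      ∀ j ∈ Set.Icc 1 τ.s, a ∈ northEast w (τ.pf j) (τ.qf j) → j ≤ i := by
  have hcard (j : ℕ) (hj : j ∈ Set.Icc 1 τ.s) :
      (northEast w (τ.pf j) (τ.qf j)).card + τ.qf j = τ.kf j + τ.pf j :=
    (satisfiesTriple_iff.1 hw).2 j hj ▸ card_northEast_add w _ _
  have hcardi := hcard i hi
  rcases hi.2.lt_or_eq with hlt | rfl
  · have hi' : i + 1 ∈ Set.Icc 1 τ.s := ⟨by omega, hlt⟩
    have hcardi' := hcard (i + 1) hi'
    have hlt' := τ.hineq i hi.1 hlt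
    obtain ⟨a, ha, ha'⟩ := Finset.exists_mem_notMem_of_card_lt_card
      (s := northEast w (τ.pf (i + 1)) (τ.qf (i + 1))) (t := northEast w (τ.pf i) (τ.qf i))
      (by omega)
    refine ⟨a, ha, fun j hj haj => ?_⟩
    by_contra! hji
    exact ha' (northEast_subset_of_nested (nested_corner hi' hj hji) haj)
  · have hlast := τ.hlast
    obtain ⟨a, ha⟩ := Finset.card_pos.1
      (show 0 < (northEast w (τ.pf τ.s) (τ.qf τ.s)).card by omega)
    exact ⟨a, ha, fun j hj _ => hj.2⟩

lemma corners_eq_essentialSet (hw : SatisfiesTriple τ w) (hsep : Separates τ.corners w) :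
    τ.corners = essentialSet w := by
  refine Set.Subset.antisymm ?_ (essentialSet_subset τ.isChain_corners hsep)
  rintro _ ⟨i, hi, rfl⟩
  obtain ⟨a, ha, ha'⟩ := exists_mem_northEast_corner hw hi
  obtain ⟨b, hb, hb'⟩ := exists_mem_southWest_corner hw hi
  refine mem_essentialSet_of_separates hsep ha hb ?_ ?_
  · rintro _ ⟨j, hj, rfl⟩ haj
    exact nested_corner hj hi (ha' j hj haj)
  · rintro _ ⟨j, hj, rfl⟩ hbj
    exact nested_corner hi hj (hb' j hj hbj)

lemma isMinFor_iff : IsMinFor τ w ↔ SatisfiesTriple τ w ∧ τ.corners = essentialSet w := by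
  refine ⟨fun h => ⟨h.1, corners_eq_essentialSet h.1 (separates_corners h)⟩, fun ⟨hw, hE⟩ => ?_⟩
  obtain ⟨w', hw'⟩ := τ.exists_isMinFor
  rwa [eq_of_separates_corners hw hw'.1 (hE ▸ separates_essentialSet w) (separates_corners hw')]

lemma avoids2143_of_isMinFor (hw : IsMinFor τ w) : Avoids2143 w :=
  (separates_corners hw).avoids2143 τ.isChain_corners

lemma ne_one_of_isMinFor (hw : IsMinFor τ w) : w ≠ 1 :=
  essentialSet_nonempty_iff.1 ((isMinFor_iff.1 hw).2 ▸ τ.corners_nonempty)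

lemma image_kf_eq (hw : IsMinFor τ w) :
    τ.kf '' Set.Icc 1 τ.s = (fun e => (southWest w e.1 e.2).card) '' essentialSet w := by
  rw [isMinFor_iff, satisfiesTriple_iff] at hw
  rw [← hw.2, corners, Set.image_image]
  exact Set.image_congr fun i hi => (hw.1.2 i hi).symm

lemma eq_of_eqOn (hs : τ.s = τ'.s) (hk : Set.EqOn τ.kf τ'.kf (Set.Icc 1 τ.s))
    (hc : Set.EqOn τ.corner τ'.corner (Set.Icc 1 τ.s)) : τ = τ' := by
  have heq (i : ℕ) : τ.kf i = τ'.kf i ∧ τ.pf i = τ'.pf i ∧ τ.qf i = τ'.qf i := by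
    by_cases hi : i ∈ Set.Icc 1 τ.s
    · exact ⟨hk hi, Prod.ext_iff.1 (hc hi)⟩
    · simp only [Set.mem_Icc] at hi
      have h := τ.hnorm i (by omega)
      have h' := τ'.hnorm i (by omega)
      omega
  obtain ⟨⟩ := τ
  obtain ⟨⟩ := τ'
  simp only [mk.injEq]
  exact ⟨hs, funext fun i => (heq i).1, funext fun i => (heq i).2.1, funext fun i => (heq i).2.2⟩

lemma eq_of_isMinFor (hw : IsMinFor τ w) (hw' : IsMinFor τ' w) : τ = τ' := by
  obtain ⟨hs, hk⟩ := eqOn_of_strictMonoOn_Icc τ.strictMonoOn_kf τ'.strictMonoOn_kf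
    ((image_kf_eq hw).trans (image_kf_eq hw').symm)
  refine eq_of_eqOn hs hk fun i hi => ?_
  have hi' : i ∈ Set.Icc 1 τ'.s := hs ▸ hi
  refine injOn_card_southWest (avoids2143_of_isMinFor hw)
    ((isMinFor_iff.1 hw).2 ▸ ⟨i, hi, rfl⟩) ((isMinFor_iff.1 hw').2 ▸ ⟨i, hi', rfl⟩) ?_
  exact ((satisfiesTriple_iff.1 hw.1).2 i hi).trans <|
    (hk hi).trans ((satisfiesTriple_iff.1 hw'.1).2 i hi').symm

lemma exists_isMinFor_of_avoids2143 (hw : IsFinitary w) (hw1 : w ≠ 1) (hv : Avoids2143 w) :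
    ∃ τ : TripleA, IsMinFor τ w := by
  obtain ⟨s, c, hmono, himage, hzero⟩ := exists_strictMonoOn_enumeration
    (finite_essentialSet hw.2) (injOn_card_southWest hv)
  have hs : 1 ≤ s := by
    have hne := essentialSet_nonempty_iff.2 hw1
    rwa [← himage, Set.image_nonempty, Set.nonempty_Icc] at hne
  have hc (i : ℕ) (h1 : 1 ≤ i) (hi : i ≤ s) : c i ∈ essentialSet w :=
    himage.subset ⟨i, ⟨h1, hi⟩, rfl⟩
  have hlt (i : ℕ) (h1 : 1 ≤ i) (hi : i < s) :
      (southWest w (c i).1 (c i).2).card < (southWest w (c (i + 1)).1 (c (i + 1)).2).card :=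
    hmono ⟨h1, hi.le⟩ ⟨by omega, hi⟩ (lt_add_one i)
  have hnested (i : ℕ) (h1 : 1 ≤ i) (hi : i < s) : Nested (c i) (c (i + 1)) :=
    nested_of_card_southWest_lt hv (hc i h1 hi.le) (hc _ (by omega) hi) (hlt i h1 hi)
  let τ : TripleA :=
    { s := s
      kf := fun i => (southWest w (c i).1 (c i).2).card
      pf := fun i => (c i).1
      qf := fun i => (c i).2
      hs := hs
      hpos := fun i h1 hi =>
        have hk := card_southWest_pos (hc i h1 hi)
        ⟨hk, fst_pos_of_mem_essentialSet hw.1 (hc i h1 hi),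
          hk.trans_le (card_southWest_le hw.1 _ _)⟩
      hkinc := hlt
      hpdec := fun i h1 hi => (hnested i h1 hi).1
      hqinc := fun i h1 hi => (hnested i h1 hi).2
      hkq := fun i _ _ => card_southWest_le hw.1 _ _
      hineq := fun i h1 hi =>
        card_southWest_add_lt_of_nested (hc i h1 hi.le) (hnested i h1 hi) fun h =>
          (hlt i h1 hi).ne (by rw [h])
      hlast := snd_lt_of_mem_essentialSet (hc s hs le_rfl)
      hnorm := fun i hi => by
        have hci : c i = 0 := hzero i (by grind)
        simpa [hci] using card_southWest_le hw.1 0 0 }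
  exact ⟨τ, isMinFor_iff.2 ⟨satisfiesTriple_iff.2 ⟨hw, fun _ _ => rfl⟩, himage⟩⟩

end TripleA

/-- every triple of type A has a unique permutation `w(τ)` of minimal
inversion number satisfying its conditions; `w(τ)` is vexillary (2143-avoiding) and
not the identity; and `τ ↦ w(τ)` is a bijection onto the non-identity finitary
2143-avoiding permutations of the positive integers. -/
theorem tripleA_vexillary_bijection :
    (∀ τ : TripleA,
      (∃! w : Equiv.Perm ℕ, IsMinFor τ w) ∧
      (∀ w : Equiv.Perm ℕ, IsMinFor τ w → Avoids2143 w ∧ w ≠ 1)) ∧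
    (∀ w : Equiv.Perm ℕ, w 0 = 0 → FixesAeFin w → w ≠ 1 → Avoids2143 w →
      ∃! τ : TripleA, IsMinFor τ w) := by
  constructor
  · intro τ
    refine ⟨τ.existsUnique_isMinFor, fun w hw => ?_⟩
    exact ⟨TripleA.avoids2143_of_isMinFor hw, TripleA.ne_one_of_isMinFor hw⟩
  · intro w hw0 hfin hw1 hv
    exact existsUnique_of_exists_of_unique
      (TripleA.exists_isMinFor_of_avoids2143 ⟨hw0, hfin⟩ hw1 hv)
      fun τ τ' => TripleA.eq_of_isMinFor
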